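/- Let r > 1 be a real number, let K be a finite extension of ℚ, and let χ be a real Dirichlet character. Then the closure of the image σ_{r,K,χ}(I_K) has only finitely many connected components; that is, C_{r,K,χ} is finite. -/

import Mathlib

open NumberField

/-- The twisted ideal divisor function `σ_{r,K,χ}(I) = ∑_{J ∣ I} χ(N(J)) N(J)^{-r}`. -/
noncomputable def sigmaChi (K : Type*) [Field K] [NumberField K] {m : ℕ}
    (χ : DirichletCharacter ℝ m) (r : ℝ) (I : Ideal (𝓞 K)) : ℝ :=
  ∑' J : {J : Ideal (𝓞 K) // J ∣ I},
    χ ((Ideal.absNorm (J : Ideal (𝓞 K)) : ℕ) : ZMod m) *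
      (Ideal.absNorm (J : Ideal (𝓞 K)) : ℝ) ^ (-r)

/-! On nonzero ideals `σ` is multiplicative, so the logarithms of its values are exactly the sums
`∑_P f_P(e_P)` over finitely supported exponents `e`, where `f_P(k)` is the logarithm of the
geometric sum `∑_{i ≤ k} (χ(N P) N(P)^{-r})^i` and has size `O(N(P)^{-r})`. By Kakeya's argument the
subset sums of a summable sequence fill an interval as soon as no term exceeds the sum of the later
ones. Here this holds for all but finitely many primes: Chebyshev's method, started from the
count `κ t + o(t)` of the ideals of norm at most `t`, produces so many primes that
`∑_{N Q > x} N(Q)^{-r}` exceeds any multiple of `x^{-r}`. The remaining finitely many primes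
translate this interval by a bounded set, and translates of a fixed nondegenerate interval by a
bounded set have finitely many components. -/

open scoped Pointwise

/-! ### Connected components of sums of sets -/

section Topology

variable {X Y : Type*} [TopologicalSpace X] [TopologicalSpace Y]

theorem finite_connectedComponents_of_preconnected_cover {S G : Set X} (hG : G.Finite)
    (h : ∀ x ∈ S, ∃ C ⊆ S, IsPreconnected C ∧ x ∈ C ∧ (C ∩ G).Nonempty) :
    Finite (ConnectedComponents ↥S) := by
  have : Finite {x : S // (x : X) ∈ G} :=
    (hG.preimage Subtype.val_injective.injOn).to_subtype
  refine Finite.of_surjective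
    (fun g : {x : S // (x : X) ∈ G} => ConnectedComponents.mk g.1) fun q => ?_
  obtain ⟨⟨x, hx⟩, rfl⟩ := ConnectedComponents.surjective_coe q
  obtain ⟨C, hCS, hC, hxC, g, hgC, hgG⟩ := h x hx
  refine ⟨⟨⟨g, hCS hgC⟩, hgG⟩, ConnectedComponents.coe_eq_coe'.2 ?_⟩
  have hg := hC.subset_connectedComponentIn hxC hCS hgC
  rw [connectedComponentIn_eq_image hx] at hg
  exact (Subtype.val_injective.mem_set_image).1 hg

theorem finite_connectedComponents_image {S : Set X} {g : X → Y} (hg : ContinuousOn g S)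
    (h : Finite (ConnectedComponents ↥S)) : Finite (ConnectedComponents ↥(g '' S)) := by
  have hmap : Continuous (Set.MapsTo.restrict g S (g '' S) (Set.mapsTo_image g S)) :=
    hg.mapsToRestrict (Set.mapsTo_image g S)
  refine Finite.of_surjective hmap.connectedComponentsMap fun q => ?_
  obtain ⟨⟨_, x, hx, rfl⟩, rfl⟩ := ConnectedComponents.surjective_coe q
  exact ⟨ConnectedComponents.mk ⟨x, hx⟩, rfl⟩

end Topology

theorem finite_connectedComponents_add {A B : Set ℝ} (hA : Bornology.IsBounded A)
    (hB : IsPreconnected B) (hB' : B.Nontrivial) : Finite (ConnectedComponents ↥(A + B)) := by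
  obtain ⟨b₀, hb₀, b₁, hb₁, hlt⟩ := hB'.exists_lt
  have hc : 0 < b₁ - b₀ := sub_pos.2 hlt
  obtain ⟨R, hR⟩ := isBounded_iff_forall_norm_le.1 hA
  set L : ℝ → ℤ := fun x => ⌈x / (b₁ - b₀)⌉
  have hL : Monotone L := fun x y hxy => Int.ceil_mono (by gcongr)
  refine finite_connectedComponents_of_preconnected_cover
    (G := (fun n : ℤ => n * (b₁ - b₀)) '' Set.Icc (L (-R + b₀)) (L (R + b₀)))
    ((Set.finite_Icc _ _).image _) ?_
  rintro _ ⟨a, ha, b, hb, rfl⟩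
  have haR := abs_le.1 (hR a ha)
  have hlow : a + b₀ ≤ L (a + b₀) * (b₁ - b₀) := (div_le_iff₀ hc).1 (Int.le_ceil _)
  have hupp : L (a + b₀) * (b₁ - b₀) ≤ a + b₁ := by
    have := (Int.ceil_lt_add_one ((a + b₀) / (b₁ - b₀))).le
    rw [← sub_le_iff_le_add, le_div_iff₀ hc] at this
    linarith
  have hconn : IsPreconnected ((a + ·) '' B) := hB.image _ (by fun_prop)
  refine ⟨(a + ·) '' B, ?_, hconn, ⟨b, hb, rfl⟩, L (a + b₀) * (b₁ - b₀), ?_,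
    L (a + b₀), ⟨hL (by linarith), hL (by linarith)⟩, rfl⟩
  · rintro _ ⟨b', hb', rfl⟩
    exact Set.add_mem_add ha hb'
  · exact hconn.ordConnected.out ⟨b₀, hb₀, rfl⟩ ⟨b₁, hb₁, rfl⟩ ⟨hlow, hupp⟩

theorem closure_add_of_isBounded {E : Type*} [NormedAddCommGroup E] [ProperSpace E] {A B : Set E}
    (hA : Bornology.IsBounded A)
    (hB : Bornology.IsBounded B) : closure (A + B) = closure A + closure B := by
  refine Set.Subset.antisymm (closure_minimal (Set.add_subset_add subset_closure subset_closure)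
    (hA.isCompact_closure.add hB.isCompact_closure).isClosed) ?_
  rintro _ ⟨a, ha, b, hb, rfl⟩
  exact map_mem_closure₂ continuous_add ha hb fun a ha b hb => Set.add_mem_add ha hb

theorem ordConnected_closure {α : Type*} [TopologicalSpace α] [LinearOrder α] [OrderTopology α]
    {S : Set α} (h : ∀ x ∈ S, ∀ y ∈ S, Set.Icc x y ⊆ closure S) :
    (closure S).OrdConnected := by
  refine ⟨fun x hx y hy z hz => ?_⟩
  rcases hz.1.eq_or_lt with rfl | hxz
  · exact hx
  rcases hz.2.eq_or_lt with rfl | hzy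
  · exact hy
  obtain ⟨x', hx'z, hx'⟩ := mem_closure_iff.1 hx (Set.Iio z) isOpen_Iio hxz
  obtain ⟨y', hzy', hy'⟩ := mem_closure_iff.1 hy (Set.Ioi z) isOpen_Ioi hzy
  exact h x' hx' y' hy' ⟨le_of_lt hx'z, le_of_lt hzy'⟩

section SubsetSums

variable {ι : Type*} {α : Type*} [LinearOrder α]

theorem exists_subset_sum_le_and_le_sum_add (N : ι → α) {w : ι → ℝ} (hw : ∀ i, 0 ≤ w i)
    {δ : ℝ} (hδ : 0 ≤ δ) {s : Finset ι} (hs : ∀ a ∈ s, w a ≤ ∑ b ∈ s with N a < N b, w b + δ)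
    {y : ℝ} (hy₀ : 0 ≤ y) (hy : y ≤ ∑ i ∈ s, w i) :
    ∃ t ⊆ s, ∑ i ∈ t, w i ≤ y ∧ y ≤ ∑ i ∈ t, w i + δ := by
  classical
  induction s using Finset.induction_on_min_value N generalizing y with
  | empty => exact ⟨∅, subset_rfl, by simpa using hy₀, by simpa using hy.trans hδ⟩
  | insert a s ha hmin ih =>
    have hs' : ∀ x ∈ s, w x ≤ ∑ b ∈ s with N x < N b, w b + δ := fun x hx => by
      simpa only [Finset.filter_insert, (hmin x hx).not_gt, if_false] using
        hs x (Finset.mem_insert_of_mem hx)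
    have hwa : w a ≤ ∑ i ∈ s, w i + δ := by
      have := hs a (Finset.mem_insert_self a s)
      rw [Finset.filter_insert, if_neg (lt_irrefl _)] at this
      exact this.trans (by
        gcongr
        · exact fun i _ _ => hw i
        · exact Finset.filter_subset _ s)
    rw [Finset.sum_insert ha] at hy
    by_cases hys : y ≤ ∑ i ∈ s, w i
    · obtain ⟨t, hts, ht⟩ := ih hs' hy₀ hys
      exact ⟨t, hts.trans (Finset.subset_insert a s), ht⟩
    by_cases hya : w a ≤ y
    · obtain ⟨t, hts, ht₁, ht₂⟩ := ih hs' (sub_nonneg.2 hya) (sub_le_iff_le_add'.2 hy)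
      refine ⟨insert a t, Finset.insert_subset_insert a hts, ?_⟩
      rw [Finset.sum_insert fun h => ha (hts h)]
      constructor <;> linarith
    · exact ⟨s, Finset.subset_insert a s, by linarith, by linarith⟩

variable {f : ι → ℕ → ℝ}

theorem exists_finsupp_sum_le_and_le_sum_add (N : ι → α) (hf₀ : ∀ i, f i 0 = 0) {l h : ι → ℕ}
    (hlh : ∀ i, f i (l i) ≤ f i (h i)) {δ : ℝ} (hδ : 0 ≤ δ) {s : Finset ι}
    (hs : ∀ a ∈ s, f a (h a) - f a (l a) ≤
      ∑ b ∈ s with N a < N b, (f b (h b) - f b (l b)) + δ)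
    {y : ℝ} (hly : ∑ i ∈ s, f i (l i) ≤ y) (hyh : y ≤ ∑ i ∈ s, f i (h i)) :
    ∃ e : ι →₀ ℕ, e.sum f ≤ y ∧ y ≤ e.sum f + δ := by
  classical
  obtain ⟨t, hts, ht₁, ht₂⟩ := exists_subset_sum_le_and_le_sum_add N
    (fun i => sub_nonneg.2 (hlh i)) hδ hs (sub_nonneg.2 hly)
    (by rw [Finset.sum_sub_distrib]; gcongr)
  set e : ι →₀ ℕ := Finsupp.indicator s fun i _ => if i ∈ t then h i else l i
  have he : e.sum f = ∑ i ∈ s, f i (l i) + ∑ i ∈ t, (f i (h i) - f i (l i)) := calc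
    e.sum f = ∑ i ∈ s, (f i (l i) + if i ∈ t then f i (h i) - f i (l i) else 0) := by
      rw [Finsupp.sum_of_support_subset _ (Finsupp.support_indicator_subset _ _) _ fun i _ => hf₀ i]
      refine Finset.sum_congr rfl fun i hi => ?_
      rw [Finsupp.indicator_of_mem hi]
      split_ifs <;> ring
    _ = _ := by rw [Finset.sum_add_distrib, Finset.sum_ite_mem, Finset.inter_eq_right.2 hts]
  exact ⟨e, by linarith, by linarith⟩

theorem tsum_indicator_le_sum_filter_add {d : ι → ℝ} (hd : Summable d) (hd₀ : ∀ i, 0 ≤ d i)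
    {δ : ℝ} {s : Finset ι} (hs : ∑' i, d i ≤ ∑ i ∈ s, d i + δ) (p : ι → Prop) [DecidablePred p] :
    ∑' i, {i | p i}.indicator d i ≤ ∑ i ∈ s with p i, d i + δ := by
  have hcompl : ∑ i ∈ s, {i | p i}ᶜ.indicator d i ≤ ∑' i, {i | p i}ᶜ.indicator d i :=
    (hd.indicator _).sum_le_tsum s fun i _ => Set.indicator_nonneg (fun i _ => hd₀ i) i
  have htsum : ∑' i, {i | p i}.indicator d i + ∑' i, {i | p i}ᶜ.indicator d i = ∑' i, d i := by
    rw [← (hd.indicator _).tsum_add (hd.indicator _)]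
    simp only [Set.indicator_self_add_compl_apply]
  have hsum : ∑ i ∈ s with p i, d i + ∑ i ∈ s, {i | p i}ᶜ.indicator d i = ∑ i ∈ s, d i := by
    rw [Finset.sum_filter, ← Finset.sum_add_distrib]
    exact Finset.sum_congr rfl fun i _ => by by_cases hi : p i <;> simp [hi]
  linarith

theorem exists_finsupp_sum_le_and_le_sum_add_of_mem_Icc (N : ι → α) (hf₀ : ∀ i, f i 0 = 0)
    {δ : ℝ} (hδ : 0 ≤ δ) {s : Finset ι}
    (hs : ∀ a ∈ s, ∀ j k, f a j - f a k ≤ ∑ b ∈ s with N a < N b, |f b 1| + δ)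
    {e₁ e₂ : ι →₀ ℕ} (he₁ : e₁.support ⊆ s) (he₂ : e₂.support ⊆ s)
    {y : ℝ} (hy : y ∈ Set.Icc (e₁.sum f) (e₂.sum f)) :
    ∃ e : ι →₀ ℕ, e.sum f ≤ y ∧ y ≤ e.sum f + δ := by
  set E := Finset.range (s.sup e₁ + s.sup e₂ + 2)
  have hE₁ : ∀ i ∈ s, e₁ i ∈ E := fun i hi =>
    Finset.mem_range.2 (by have := Finset.le_sup (f := e₁) hi; lia)
  have hE₂ : ∀ i ∈ s, e₂ i ∈ E := fun i hi =>
    Finset.mem_range.2 (by have := Finset.le_sup (f := e₂) hi; lia)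
  have h0E : 0 ∈ E := Finset.mem_range.2 (by lia)
  have h1E : 1 ∈ E := Finset.mem_range.2 (by lia)
  choose l hl using fun i => (Finset.exists_min_image E (f i) ⟨0, h0E⟩).imp fun _ h => h.2
  choose h hh using fun i => (Finset.exists_max_image E (f i) ⟨0, h0E⟩).imp fun _ h => h.2
  have hwidth : ∀ i, |f i 1| ≤ f i (h i) - f i (l i) := fun i => by
    have := hl i 0 h0E; have := hl i 1 h1E; have := hh i 0 h0E; have := hh i 1 h1E
    rw [hf₀] at *
    exact abs_le.2 ⟨by linarith, by linarith⟩
  have hsum : ∀ e : ι →₀ ℕ, e.support ⊆ s → e.sum f = ∑ i ∈ s, f i (e i) := fun e he =>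
    Finsupp.sum_of_support_subset _ he _ fun i _ => hf₀ i
  rw [hsum e₁ he₁, hsum e₂ he₂] at hy
  exact exists_finsupp_sum_le_and_le_sum_add N hf₀
    (fun i => (hl i 0 h0E).trans (hh i 0 h0E)) hδ
    (fun a ha => (hs a ha (h a) (l a)).trans (by gcongr with i; exact hwidth i))
    ((Finset.sum_le_sum fun i hi => hl i _ (hE₁ i hi)).trans hy.1)
    (hy.2.trans (Finset.sum_le_sum fun i hi => hh i _ (hE₂ i hi)))

theorem ordConnected_closure_range_finsupp_sum (N : ι → α) (hf₀ : ∀ i, f i 0 = 0)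
    (hf₁ : Summable fun i => |f i 1|)
    (hosc : ∀ a j k, f a j - f a k ≤ ∑' b, {b | N a < N b}.indicator (fun b => |f b 1|) b) :
    (closure (Set.range fun e : ι →₀ ℕ => e.sum f)).OrdConnected := by
  classical
  refine ordConnected_closure ?_
  rintro _ ⟨e₁, rfl⟩ _ ⟨e₂, rfl⟩ z hz
  refine Metric.mem_closure_iff.2 fun ε hε => ?_
  obtain ⟨s₀, hs₀⟩ := Filter.eventually_atTop.1
    (hf₁.hasSum.eventually_const_lt (sub_lt_self (∑' i, |f i 1|) (half_pos hε)))
  have htotal := sub_lt_iff_lt_add.1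
    (hs₀ (s₀ ∪ (e₁.support ∪ e₂.support)) Finset.subset_union_left)
  obtain ⟨e, he₁, he₂⟩ := exists_finsupp_sum_le_and_le_sum_add_of_mem_Icc N hf₀ (half_pos hε).le
    (fun a _ j k => (hosc a j k).trans
      (tsum_indicator_le_sum_filter_add hf₁ (fun i => abs_nonneg _) htotal.le _))
    (Finset.subset_union_left.trans Finset.subset_union_right)
    (Finset.subset_union_right.trans Finset.subset_union_right) hz
  refine ⟨_, ⟨e, rfl⟩, ?_⟩
  rw [Real.dist_eq, abs_lt]
  constructor <;> linarith

end SubsetSums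

section FinsuppSums

variable {ι : Type*} {f : ι → ℕ → ℝ}

theorem isBounded_range_finsupp_sum {u : ι → ℝ} (hu : Summable u) (hfu : ∀ i k, |f i k| ≤ u i) :
    Bornology.IsBounded (Set.range fun e : ι →₀ ℕ => e.sum f) := by
  refine isBounded_iff_forall_norm_le.2 ⟨∑' i, u i, ?_⟩
  rintro _ ⟨e, rfl⟩
  calc |∑ i ∈ e.support, f i (e i)| ≤ ∑ i ∈ e.support, |f i (e i)| :=
        Finset.abs_sum_le_sum_abs _ _
    _ ≤ ∑ i ∈ e.support, u i := Finset.sum_le_sum fun i _ => hfu i (e i)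
    _ ≤ ∑' i, u i := hu.sum_le_tsum _ fun i _ => (abs_nonneg _).trans (hfu i 0)

theorem finsupp_sum_eq_subtypeDomain_add {R M : Type*} [Zero R] [AddCommMonoid M]
    (f : ι → R → M) (p : ι → Prop) (e : ι →₀ R) :
    e.sum f = (e.subtypeDomain p).sum (fun i => f i) +
      (e.subtypeDomain fun i => ¬p i).sum fun i => f i := by
  classical
  simp only [Finsupp.sum, Finsupp.support_subtypeDomain, Finsupp.subtypeDomain_apply]
  rw [Finset.sum_subtype_eq_sum_filter (f := fun i => f i (e i)),
    Finset.sum_subtype_eq_sum_filter (f := fun i => f i (e i)),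
    Finset.sum_filter_add_sum_filter_not]

theorem range_finsupp_sum_eq_add {R M : Type*} [Zero R] [AddCommMonoid M] (f : ι → R → M)
    (p : ι → Prop) :
    (Set.range fun e : ι →₀ R => e.sum f) =
      (Set.range fun e : {i // p i} →₀ R => e.sum fun i => f i) +
        Set.range fun e : {i // ¬p i} →₀ R => e.sum fun i => f i := by
  classical
  refine Set.Subset.antisymm ?_ ?_
  · rintro _ ⟨e, rfl⟩
    exact ⟨_, ⟨_, rfl⟩, _, ⟨_, rfl⟩, (finsupp_sum_eq_subtypeDomain_add f p e).symm⟩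
  · rintro _ ⟨_, ⟨e₁, rfl⟩, _, ⟨e₂, rfl⟩, rfl⟩
    refine ⟨e₁.piecewise e₂, ?_⟩
    simp only [finsupp_sum_eq_subtypeDomain_add f p, Finsupp.subtypeDomain_piecewise,
      Finsupp.subtypeDomain_not_piecewise]

theorem eventually_cofinite_forall_ge {N : ι → ℕ} (hN : Filter.Tendsto N .cofinite .atTop)
    {p : ι → Prop} (hp : ∀ᶠ i in .cofinite, p i) :
    ∀ᶠ i in .cofinite, ∀ j, N i ≤ N j → p j := by
  obtain ⟨n, hn⟩ := (Set.Finite.image N hp).bddAbove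
  filter_upwards [hN.eventually_gt_atTop n] with i hi j hij
  by_contra hj
  exact (hi.trans_le hij).not_ge (hn ⟨j, hj, rfl⟩)

theorem finite_connectedComponents_closure_range_finsupp_sum {N : ι → ℕ}
    (hN : Filter.Tendsto N .cofinite .atTop) (hf₀ : ∀ i, f i 0 = 0) {u : ι → ℝ}
    (hu : Summable u) (hfu : ∀ i k, |f i k| ≤ u i) (hf₁ : ∃ᶠ i in .cofinite, f i 1 ≠ 0)
    (hosc : ∀ᶠ a in .cofinite, ∀ j k,
      f a j - f a k ≤ ∑' b, {b | N a < N b}.indicator (fun b => |f b 1|) b) :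
    Finite (ConnectedComponents ↥(closure (Set.range fun e : ι →₀ ℕ => e.sum f))) := by
  set p : ι → Prop := fun a => ∀ b, N a ≤ N b → ∀ j k,
    f b j - f b k ≤ ∑' c, {c | N b < N c}.indicator (fun c => |f c 1|) c
  have hp : ∀ᶠ a in .cofinite, p a := eventually_cofinite_forall_ge hN hosc
  have htail : ∀ a : {a // p a}, ∑' b : {a // p a}, {b : {a // p a} | N a < N b}.indicator
      (fun b => |f b 1|) b = ∑' b, {b | N a < N b}.indicator (fun b => |f b 1|) b := fun a => by
    have hsub : {b | N a < N b} ⊆ {b | p b} := fun b hb c hc => a.2 c (hb.le.trans hc)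
    rw [← Set.inter_eq_self_of_subset_right hsub, ← Set.indicator_indicator]
    exact tsum_subtype {b | p b} ({b | N a < N b}.indicator fun b => |f b 1|)
  have hconn : (closure (Set.range fun e : {a // p a} →₀ ℕ => e.sum fun i => f i)).OrdConnected :=
    ordConnected_closure_range_finsupp_sum (fun a : {a // p a} => N a) (fun a => hf₀ a)
      ((hu.of_nonneg_of_le (fun _ => abs_nonneg _) fun i => hfu i 1).subtype _)
      fun a j k => htail a ▸ a.2 a le_rfl j k
  obtain ⟨i, hi₁, hpi⟩ := (hf₁.and_eventually hp).exists
  have hnontrivial : (Set.range fun e : {a // p a} →₀ ℕ => e.sum fun i => f i).Nontrivial :=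
    ⟨_, ⟨0, rfl⟩, _, ⟨Finsupp.single ⟨i, hpi⟩ 1, rfl⟩, by
      simpa [Finsupp.sum_single_index, hf₀] using hi₁.symm⟩
  have hbdd : ∀ q : ι → Prop,
      Bornology.IsBounded (Set.range fun e : {a // q a} →₀ ℕ => e.sum fun i => f i) := fun q =>
    isBounded_range_finsupp_sum (hu.subtype _) fun i k => hfu i k
  rw [range_finsupp_sum_eq_add f p, closure_add_of_isBounded (hbdd p) (hbdd _), add_comm]
  exact finite_connectedComponents_add (hbdd _).closure hconn.isPreconnected
    (hnontrivial.mono subset_closure)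

end FinsuppSums

/-! ### Logarithms of geometric sums -/

section GeometricSums

variable {x : ℝ}

theorem geom_sum_le_inv_one_sub_abs (hx : |x| < 1) (n : ℕ) :
    ∑ i ∈ Finset.range n, x ^ i ≤ (1 - |x|)⁻¹ := calc
  ∑ i ∈ Finset.range n, x ^ i ≤ ∑ i ∈ Finset.range n, |x| ^ i :=
    Finset.sum_le_sum fun i _ => (le_abs_self _).trans_eq (abs_pow x i)
  _ ≤ ∑' i, |x| ^ i := (summable_geometric_of_lt_one (abs_nonneg x) hx).sum_le_tsum _
    fun i _ => by positivity
  _ = (1 - |x|)⁻¹ := tsum_geometric_of_lt_one (abs_nonneg x) hx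

theorem one_sub_abs_le_geom_sum (hx : |x| < 1) (k : ℕ) :
    1 - |x| ≤ ∑ i ∈ Finset.range (k + 1), x ^ i := by
  rcases k with _ | k
  · simp
  have hpow : x ^ (k + 2) ≤ |x| ^ 2 := calc
    x ^ (k + 2) ≤ |x| ^ (k + 2) := (le_abs_self _).trans_eq (abs_pow x _)
    _ ≤ |x| ^ 2 := pow_le_pow_of_le_one (abs_nonneg x) hx.le (by lia)
  refine le_of_mul_le_mul_left ?_ (sub_pos.2 (abs_lt.1 hx).2)
  rw [mul_neg_geom_sum]
  calc (1 - x) * (1 - |x|) ≤ (1 + |x|) * (1 - |x|) := by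
        refine mul_le_mul_of_nonneg_right ?_ (sub_nonneg.2 hx.le)
        linarith [neg_abs_le x]
    _ = 1 - |x| ^ 2 := by ring
    _ ≤ 1 - x ^ (k + 2) := by gcongr

theorem geom_sum_pos_of_abs_lt_one (hx : |x| < 1) (k : ℕ) :
    0 < ∑ i ∈ Finset.range (k + 1), x ^ i :=
  (sub_pos.2 hx).trans_le (one_sub_abs_le_geom_sum hx k)

theorem abs_log_geom_sum_le (hx : |x| ≤ 1 / 2) (k : ℕ) :
    |Real.log (∑ i ∈ Finset.range (k + 1), x ^ i)| ≤ 2 * |x| := by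
  have hx₁ : |x| < 1 := by linarith
  have hpos : 0 < 1 - |x| := sub_pos.2 hx₁
  have hlower := Real.log_le_log hpos (one_sub_abs_le_geom_sum hx₁ k)
  have hupper := Real.log_le_log (geom_sum_pos_of_abs_lt_one hx₁ k)
    (geom_sum_le_inv_one_sub_abs hx₁ (k + 1))
  have hlog : -(2 * |x|) ≤ Real.log (1 - |x|) := by
    refine le_trans ?_ (Real.one_sub_inv_le_log_of_pos hpos)
    rw [neg_le_sub_iff_le_add, inv_le_iff_one_le_mul₀ hpos]
    nlinarith [abs_nonneg x]
  rw [Real.log_inv] at hupper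
  exact abs_le.2 ⟨by linarith, by linarith⟩

theorem abs_div_two_le_abs_log_one_add (hx : |x| ≤ 1 / 2) : |x| / 2 ≤ |Real.log (1 + x)| := by
  obtain ⟨hx₁, hx₂⟩ := abs_le.1 hx
  have hpos : 0 < 1 + x := by linarith
  rcases le_total 0 x with h | h
  · rw [abs_of_nonneg h]
    refine le_trans ?_ ((Real.one_sub_inv_le_log_of_pos hpos).trans (le_abs_self _))
    rw [le_sub_comm, inv_le_iff_one_le_mul₀ hpos]
    nlinarith
  · rw [abs_of_nonpos h]
    linarith [Real.log_le_sub_one_of_pos hpos, neg_le_abs (Real.log (1 + x))]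

end GeometricSums

/-! ### Divisor sums over ideals -/

section DivisorSums

variable {M A : Type*} [CommMonoidWithZero M] [CommSemiring A] [TopologicalSpace A]

/-- The divisor sum `∑_{b ∣ a} ψ b`, which is an honest finite sum for `a ≠ 0` when `M` has unique
factorization and finitely many units. It is stated with `∑'` so that `sigmaChi K χ r` is by
definition the divisor sum of `J ↦ χ (N J) * (N J) ^ (-r)`. -/
noncomputable def divisorSum (ψ : M → A) (a : M) : A := ∑' b : {b : M // b ∣ a}, ψ b

theorem divisorSum_eq_sum (ψ : M → A) {a : M} {s : Finset M} (hs : ∀ b, b ∈ s ↔ b ∣ a) :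
    divisorSum ψ a = ∑ b ∈ s, ψ b := by
  rw [← Finset.tsum_subtype]
  exact ((Equiv.subtypeEquivRight hs).tsum_eq fun b : {b : M // b ∣ a} => ψ b).symm

variable [UniqueFactorizationMonoid M] [Subsingleton Mˣ]

theorem bijective_mul_divisors {a b : M} (hab : IsRelPrime a b) :
    Function.Bijective fun p : {c : M // c ∣ a} × {d : M // d ∣ b} =>
      (⟨p.1 * p.2, mul_dvd_mul p.1.2 p.2.2⟩ : {e : M // e ∣ a * b}) := by
  have hcop : ∀ {x y : M}, x ∣ a → y ∣ b → IsRelPrime x y := fun hx hy =>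
    hab.of_dvd_left hx |>.of_dvd_right hy
  constructor
  · rintro ⟨⟨c, hc⟩, ⟨d, hd⟩⟩ ⟨⟨c', hc'⟩, ⟨d', hd'⟩⟩ h
    have heq : c * d = c' * d' := congrArg Subtype.val h
    have hcc' : c = c' := dvd_antisymm
      ((hcop hc hd').dvd_of_dvd_mul_right (heq ▸ dvd_mul_right c d))
      ((hcop hc' hd).dvd_of_dvd_mul_right (heq ▸ dvd_mul_right c' d'))
    have hdd' : d = d' := dvd_antisymm
      ((hcop hc' hd).symm.dvd_of_dvd_mul_left (heq ▸ dvd_mul_left d c))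
      ((hcop hc hd').symm.dvd_of_dvd_mul_left (heq ▸ dvd_mul_left d' c'))
    simp only [hcc', hdd']
  · rintro ⟨e, he⟩
    obtain ⟨c, d, hc, hd, rfl⟩ := exists_dvd_and_dvd_of_dvd_mul he
    exact ⟨⟨⟨c, hc⟩, ⟨d, hd⟩⟩, rfl⟩

theorem divisorSum_mul (ψ : M →* A) {a b : M} (ha : a ≠ 0) (hb : b ≠ 0) (hab : IsRelPrime a b) :
    divisorSum ψ (a * b) = divisorSum ψ a * divisorSum ψ b := by
  have := Fintype.ofSubsingleton (1 : Mˣ)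
  have := UniqueFactorizationMonoid.fintypeSubtypeDvd a ha
  have := UniqueFactorizationMonoid.fintypeSubtypeDvd b hb
  rw [divisorSum, ← (Equiv.ofBijective _ (bijective_mul_divisors hab)).tsum_eq]
  simp only [divisorSum, tsum_fintype, Fintype.sum_mul_sum, Fintype.sum_prod_type,
    Equiv.ofBijective_apply, map_mul]

theorem divisorSum_prime_pow (ψ : M →* A) {p : M} (hp : Prime p) (k : ℕ) :
    divisorSum ψ (p ^ k) = ∑ i ∈ Finset.range (k + 1), ψ p ^ i := by
  classical
  rw [divisorSum_eq_sum ψ (s := (Finset.range (k + 1)).image (p ^ ·)), Finset.sum_image]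
  · simp only [map_pow]
  · exact fun i _ j _ h => pow_injective_of_not_isUnit hp.not_isUnit hp.ne_zero h
  · intro b
    simp only [dvd_prime_pow hp, associated_iff_eq, Finset.mem_image, Finset.mem_range,
      Nat.lt_succ_iff, eq_comm]

end DivisorSums

section PrimeFactorization

open IsDedekindDomain

variable {R A : Type*} [CommRing R] [IsDedekindDomain R] [CommSemiring A] [TopologicalSpace A]

theorem divisorSum_prod_pow (ψ : Ideal R →* A) (e : HeightOneSpectrum R →₀ ℕ) :
    divisorSum ψ (e.prod fun P k => P.asIdeal ^ k) =
      e.prod fun P k => ∑ i ∈ Finset.range (k + 1), ψ P.asIdeal ^ i := by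
  classical
  suffices h : ∀ s : Finset (HeightOneSpectrum R), divisorSum ψ (∏ P ∈ s, P.asIdeal ^ e P) =
      ∏ P ∈ s, ∑ i ∈ Finset.range (e P + 1), ψ P.asIdeal ^ i from h e.support
  intro s
  induction s using Finset.induction_on with
  | empty =>
    rw [Finset.prod_empty, Finset.prod_empty, divisorSum_eq_sum ψ (s := {1}) fun J => by
      rw [Finset.mem_singleton, ← isUnit_iff_dvd_one, isUnit_iff_eq_one], Finset.sum_singleton,
      map_one]
  | insert P s hP ih =>
    rw [Finset.prod_insert hP, Finset.prod_insert hP, divisorSum_mul, ih,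
      divisorSum_prime_pow ψ P.prime]
    · exact pow_ne_zero _ P.ne_bot
    · exact Finset.prod_ne_zero_iff.2 fun Q _ => pow_ne_zero _ Q.ne_bot
    · exact (IsCoprime.prod_right fun Q hQ =>
        P.isCoprime_pow_of_ne Q (ne_of_mem_of_not_mem hQ hP).symm _ _).isRelPrime

theorem range_prod_pow_heightOneSpectrum :
    (Set.range fun e : HeightOneSpectrum R →₀ ℕ => e.prod fun P k => P.asIdeal ^ k) =
      {I : Ideal R | I ≠ 0} := by
  refine Set.Subset.antisymm ?_ fun I hI => ?_
  · rintro _ ⟨e, rfl⟩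
    exact Finset.prod_ne_zero_iff.2 fun P _ => pow_ne_zero _ P.ne_bot
  · have hfin : (Function.support fun P : HeightOneSpectrum R => multiplicity P.asIdeal I).Finite :=
      (Ideal.finite_factors hI).subset fun P hP => dvd_of_multiplicity_pos (Nat.pos_of_ne_zero hP)
    refine ⟨Finsupp.ofSupportFinite _ hfin, Eq.trans (Eq.symm ?_)
      (Ideal.finprod_heightOneSpectrum_pow_multiplicity hI)⟩
    refine finprod_eq_prod_of_mulSupport_subset _ fun P hP => ?_
    exact Finset.mem_coe.2 <| Finsupp.mem_support_iff.2 fun h : multiplicity P.asIdeal I = 0 =>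
      hP (by simp only [h, pow_zero])

theorem image_divisorSum_ne_zero (ψ : Ideal R →* A) :
    divisorSum ψ '' {I | I ≠ 0} = Set.range fun e : HeightOneSpectrum R →₀ ℕ =>
      e.prod fun P k => ∑ i ∈ Finset.range (k + 1), ψ P.asIdeal ^ i := by
  rw [← range_prod_pow_heightOneSpectrum, ← Set.range_comp]
  exact congrArg Set.range (funext fun e => divisorSum_prod_pow ψ e)

end PrimeFactorization

/-! ### Chebyshev's method for prime ideals -/

theorem tendsto_log_const_mul_div_log {c : ℝ} (hc : 0 < c) :
    Filter.Tendsto (fun t => Real.log (c * t) / Real.log t) .atTop (nhds 1) := by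
  have hlim := (Real.tendsto_log_atTop.const_div_atTop (Real.log c)).add_const 1
  rw [zero_add] at hlim
  refine hlim.congr' ?_
  filter_upwards [Filter.eventually_gt_atTop 1] with t ht
  rw [Real.log_mul hc.ne' (by linarith), add_div, div_self (Real.log_pos ht).ne']

theorem summable_rpow_neg_of_card_le {ι : Type*} {N : ι → ℝ} {C : ℝ} (hC : 0 < C)
    (hcard : ∀ (s : Finset ι) (a : ι), (∀ i ∈ s, N i ≤ N a) → (s.card : ℝ) ≤ C * N a)
    {σ : ℝ} (hσ : 1 < σ) : Summable fun i => N i ^ (-σ) := by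
  classical
  have hN : ∀ i, 0 < N i := fun i => pos_of_mul_pos_right
    (one_pos.trans_le (by simpa using hcard {i} i (by simp))) hC.le
  -- Ordering `N` increasingly, its `n`-th value is at least `n / C`.
  have hbound : ∀ s : Finset ι, ∑ i ∈ s, N i ^ (-σ) ≤
      ∑ n ∈ Finset.range s.card, (((n + 1 : ℕ) : ℝ) / C) ^ (-σ) := fun s => by
    induction s using Finset.induction_on_max_value N with
    | empty => simp
    | insert a s ha hmax ih =>
      have hle : ((s.card + 1 : ℕ) : ℝ) / C ≤ N a := by
        rw [div_le_iff₀' hC, ← Finset.card_insert_of_notMem ha]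
        exact hcard _ a ((Finset.forall_mem_insert a s _).2 ⟨le_rfl, hmax⟩)
      rw [Finset.sum_insert ha, Finset.card_insert_of_notMem ha, Finset.sum_range_succ, add_comm]
      exact add_le_add ih (Real.rpow_le_rpow_of_nonpos (by positivity) hle (by linarith))
  have hsum : Summable fun n : ℕ => (((n + 1 : ℕ) : ℝ) / C) ^ (-σ) := by
    refine (summable_nat_add_iff 1 (f := fun n : ℕ => ((n : ℝ) / C) ^ (-σ))).2 ?_
    simp only [Real.div_rpow (Nat.cast_nonneg _) hC.le]
    exact (Real.summable_nat_rpow.2 (by linarith)).div_const _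
  exact summable_of_sum_le (fun i => (Real.rpow_pos_of_pos (hN i) _).le) fun s =>
    (hbound s).trans (hsum.sum_le_tsum _ fun n _ => by positivity)

theorem sum_Icc_div_pow_le {F : ℝ → ℝ} {C : ℝ} (hF₀ : ∀ t, 0 ≤ F t)
    (hF : ∀ t, 0 ≤ t → F t ≤ C * t) {q t : ℝ} (hq : 2 ≤ q) (ht : 0 ≤ t) (n : ℕ) :
    ∑ k ∈ Finset.Icc 1 n, F (t / q ^ k) ≤ F (t / q) + 2 * C * t / q ^ 2 := by
  have hCt : 0 ≤ C * t := (hF₀ t).trans (hF t ht)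
  have hhigher : ∑ k ∈ Finset.Ico 2 (n + 1), F (t / q ^ k) ≤ 2 * C * t / q ^ 2 := calc
    _ ≤ ∑ k ∈ Finset.Ico 2 (n + 1), C * t * q⁻¹ ^ k := Finset.sum_le_sum fun k _ =>
      (hF _ (by positivity)).trans_eq (by rw [inv_pow]; ring)
    _ ≤ C * t * (q⁻¹ ^ 2 / (1 - q⁻¹)) := by
      rw [← Finset.mul_sum]
      exact mul_le_mul_of_nonneg_left (geom_sum_Ico_le_of_lt_one (by positivity)
        (inv_lt_one_of_one_lt₀ (by linarith))) hCt
    _ ≤ C * t * (q⁻¹ ^ 2 / (1 / 2)) := by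
      have : q⁻¹ ≤ 1 / 2 := by simpa only [one_div] using inv_anti₀ two_pos hq
      gcongr
      linarith
    _ = 2 * C * t / q ^ 2 := by rw [inv_pow]; ring
  calc ∑ k ∈ Finset.Icc 1 n, F (t / q ^ k) ≤ ∑ k ∈ insert 1 (Finset.Ico 2 (n + 1)), F (t / q ^ k) :=
        Finset.sum_le_sum_of_subset_of_nonneg (fun k hk => by
          simp only [Finset.mem_insert, Finset.mem_Ico, Finset.mem_Icc] at hk ⊢
          lia) fun k _ _ => hF₀ _
    _ = F (t / q) + ∑ k ∈ Finset.Ico 2 (n + 1), F (t / q ^ k) := by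
        rw [Finset.sum_insert (by simp), pow_one]
    _ ≤ F (t / q) + 2 * C * t / q ^ 2 := by gcongr

section IdealCounting

open IsDedekindDomain Filter Topology
open Ideal (absNorm)

variable (K : Type*) [Field K] [NumberField K]

theorem finite_setOf_ne_zero_and_absNorm_le (t : ℝ) :
    {I : Ideal (𝓞 K) | I ≠ 0 ∧ (absNorm I : ℝ) ≤ t}.Finite :=
  (Ideal.finite_setOfPred_absNorm_le ⌊t⌋₊).subset fun _ hI => Nat.le_floor hI.2

theorem finite_setOf_absNorm_asIdeal_le (t : ℝ) :
    {P : HeightOneSpectrum (𝓞 K) | (absNorm P.asIdeal : ℝ) ≤ t}.Finite :=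
  ((finite_setOf_ne_zero_and_absNorm_le K t).preimage
    (Set.injOn_of_injective fun _ _ => HeightOneSpectrum.ext)).subset fun P hP => ⟨P.ne_bot, hP⟩

/-- The finset of nonzero integral ideals of norm at most `t`. -/
noncomputable def idealsNormLE (t : ℝ) : Finset (Ideal (𝓞 K)) :=
  (finite_setOf_ne_zero_and_absNorm_le K t).toFinset

/-- The finset of prime ideals of norm at most `t`. -/
noncomputable def primesNormLE (t : ℝ) : Finset (HeightOneSpectrum (𝓞 K)) :=
  (finite_setOf_absNorm_asIdeal_le K t).toFinset

/-- The number of nonzero integral ideals of norm at most `t`, as a real number. -/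
noncomputable def idealCount (t : ℝ) : ℝ := (idealsNormLE K t).card

/-- The ideal analogue `∑_{N I ≤ t} log (N I)` of `log ⌊t⌋!`, through which Chebyshev's method
accesses the distribution of the prime ideals. -/
noncomputable def sumLogNorm (t : ℝ) : ℝ := ∑ I ∈ idealsNormLE K t, Real.log (absNorm I)

/-- The sum `∑_{N P ≤ t} log (N P) / N P` over prime ideals from Mertens' first theorem. -/
noncomputable def mertensSum (t : ℝ) : ℝ :=
  ∑ P ∈ primesNormLE K t, Real.log (absNorm P.asIdeal) / absNorm P.asIdeal

variable {K}

theorem mem_idealsNormLE {t : ℝ} {I : Ideal (𝓞 K)} :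
    I ∈ idealsNormLE K t ↔ I ≠ 0 ∧ (absNorm I : ℝ) ≤ t := Set.Finite.mem_toFinset _

theorem mem_primesNormLE {t : ℝ} {P : HeightOneSpectrum (𝓞 K)} :
    P ∈ primesNormLE K t ↔ (absNorm P.asIdeal : ℝ) ≤ t := Set.Finite.mem_toFinset _

theorem idealsNormLE_mono : Monotone (idealsNormLE K) := fun _ _ hst _ hI =>
  mem_idealsNormLE.2 ((mem_idealsNormLE.1 hI).imp_right hst.trans')

theorem primesNormLE_mono : Monotone (primesNormLE K) := fun _ _ hst _ hP =>
  mem_primesNormLE.2 ((mem_primesNormLE.1 hP).trans hst)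

theorem one_le_absNorm {I : Ideal (𝓞 K)} (hI : I ≠ 0) : (1 : ℝ) ≤ absNorm I :=
  Nat.one_le_cast.2 (Nat.one_le_iff_ne_zero.2 (Ideal.absNorm_eq_zero_iff.not.2 hI))

theorem two_le_absNorm (P : HeightOneSpectrum (𝓞 K)) : (2 : ℝ) ≤ absNorm P.asIdeal :=
  Nat.ofNat_le_cast.2 (HeightOneSpectrum.one_lt_absNorm P)

theorem log_absNorm_pos (P : HeightOneSpectrum (𝓞 K)) : 0 < Real.log (absNorm P.asIdeal) :=
  Real.log_pos (one_lt_two.trans_le (two_le_absNorm P))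

theorem tendsto_absNorm_asIdeal_cofinite :
    Tendsto (fun P : HeightOneSpectrum (𝓞 K) => absNorm P.asIdeal) cofinite atTop :=
  tendsto_atTop.2 fun n => (finite_setOf_absNorm_asIdeal_le K n).subset fun _ hP =>
    Nat.cast_le (α := ℝ).2 (le_of_not_ge hP)

theorem card_filter_dvd_idealsNormLE {Q : Ideal (𝓞 K)} (hQ : Q ≠ 0) (t : ℝ)
    [DecidablePred fun I => Q ∣ I] :
    (({I ∈ idealsNormLE K t | Q ∣ I}.card : ℕ) : ℝ) = idealCount K (t / absNorm Q) := by
  have hQ₀ : (0 : ℝ) < absNorm Q := one_pos.trans_le (one_le_absNorm hQ)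
  refine congrArg Nat.cast (Eq.symm ?_)
  refine Finset.card_bij (fun I _ => Q * I) (fun I hI => ?_)
    (fun _ _ _ _ h => mul_left_cancel₀ hQ h) fun I hI => ?_
  · rw [mem_idealsNormLE, le_div_iff₀' hQ₀] at hI
    rw [Finset.mem_filter, mem_idealsNormLE, map_mul, Nat.cast_mul]
    exact ⟨⟨mul_ne_zero hQ hI.1, hI.2⟩, dvd_mul_right Q I⟩
  · rw [Finset.mem_filter, mem_idealsNormLE] at hI
    obtain ⟨⟨hI₀, hIt⟩, J, rfl⟩ := hI
    rw [map_mul, Nat.cast_mul] at hIt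
    exact ⟨J, mem_idealsNormLE.2 ⟨right_ne_zero_of_mul hI₀, (le_div_iff₀' hQ₀).2 hIt⟩, rfl⟩

theorem sumLogNorm_le_idealCount_mul_log (t : ℝ) :
    sumLogNorm K t ≤ idealCount K t * Real.log t := by
  rw [idealCount, ← nsmul_eq_mul]
  refine Finset.sum_le_card_nsmul _ _ _ fun I hI => ?_
  rw [mem_idealsNormLE] at hI
  exact Real.log_le_log (one_pos.trans_le (one_le_absNorm hI.1)) hI.2

theorem idealCount_sub_mul_log_le_sumLogNorm {t u : ℝ} (hu : 0 < u) (hut : u ≤ t) :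
    (idealCount K t - idealCount K u) * Real.log u ≤ sumLogNorm K t := by
  classical
  have hsub := idealsNormLE_mono (K := K) hut
  rw [idealCount, idealCount, ← Nat.cast_sub (Finset.card_le_card hsub),
    ← Finset.card_sdiff_of_subset hsub, ← nsmul_eq_mul]
  refine (Finset.card_nsmul_le_sum _ (fun I => Real.log (absNorm I)) _ fun I hI => ?_).trans
    (Finset.sum_le_sum_of_subset_of_nonneg Finset.sdiff_subset fun I _ _ =>
      Real.log_natCast_nonneg _)
  simp only [Finset.mem_sdiff, mem_idealsNormLE, not_and, not_le] at hI
  exact Real.log_le_log hu (hI.2 hI.1.1).le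

variable (K)

theorem tendsto_idealCount_div :
    Tendsto (fun t => idealCount K t / t) atTop (𝓝 (dedekindZeta_residue K)) := by
  have hcount : ∀ t, idealCount K t = Nat.card
      {I : nonZeroDivisors (Ideal (𝓞 K)) // (absNorm (I : Ideal (𝓞 K)) : ℝ) ≤ t} := fun t => by
    rw [Nat.card_congr (Equiv.subtypeSubtypeEquivSubtypeInter
      (fun I : Ideal (𝓞 K) => I ∈ nonZeroDivisors (Ideal (𝓞 K))) fun I => (absNorm I : ℝ) ≤ t)]
    exact congrArg Nat.cast (Nat.subtype_card _ fun I => by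
      rw [mem_idealsNormLE, mem_nonZeroDivisors_iff_ne_zero]).symm
  simp only [hcount]
  exact NumberField.Ideal.tendsto_norm_le_div_atTop₀ K

theorem exists_forall_ge_mul_le_idealCount {b : ℝ} (hb : b < dedekindZeta_residue K) :
    ∃ s, 1 ≤ s ∧ ∀ t, s ≤ t → b * t ≤ idealCount K t := by
  obtain ⟨s, hs⟩ := eventually_atTop.1
    ((tendsto_idealCount_div K).eventually_const_le hb)
  exact ⟨max s 1, le_max_right _ _, fun t ht => (le_div_iff₀
    (one_pos.trans_le ((le_max_right _ _).trans ht))).1 (hs t ((le_max_left _ _).trans ht))⟩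

theorem exists_forall_ge_idealCount_le_mul {c : ℝ} (hc : dedekindZeta_residue K < c) :
    ∃ s, 1 ≤ s ∧ ∀ t, s ≤ t → idealCount K t ≤ c * t := by
  obtain ⟨s, hs⟩ := eventually_atTop.1
    ((tendsto_idealCount_div K).eventually_le_const hc)
  exact ⟨max s 1, le_max_right _ _, fun t ht => (div_le_iff₀
    (one_pos.trans_le ((le_max_right _ _).trans ht))).1 (hs t ((le_max_left _ _).trans ht))⟩

theorem exists_idealCount_le_mul : ∃ C : ℝ, 0 < C ∧ ∀ t, 0 ≤ t → idealCount K t ≤ C * t := by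
  obtain ⟨t₀, -, ht₀⟩ := exists_forall_ge_idealCount_le_mul K (lt_add_one _)
  have hcount₀ : 0 ≤ idealCount K t₀ := Nat.cast_nonneg _
  have hres := dedekindZeta_residue_pos K
  refine ⟨dedekindZeta_residue K + 1 + idealCount K t₀, by linarith, fun t ht => ?_⟩
  rcases lt_or_ge t 1 with h1 | h1
  · have hempty : idealsNormLE K t = ∅ := Finset.eq_empty_of_forall_notMem fun I hI => by
      rw [mem_idealsNormLE] at hI
      linarith [one_le_absNorm hI.1]
    rw [idealCount, hempty, Finset.card_empty, Nat.cast_zero]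
    positivity
  · rcases le_total t₀ t with h | h
    · have := ht₀ t h
      nlinarith
    · have : idealCount K t ≤ idealCount K t₀ :=
        Nat.cast_le.2 (Finset.card_le_card (idealsNormLE_mono h))
      nlinarith

theorem summable_absNorm_rpow_neg {σ : ℝ} (hσ : 1 < σ) :
    Summable fun P : HeightOneSpectrum (𝓞 K) => (absNorm P.asIdeal : ℝ) ^ (-σ) := by
  obtain ⟨C, hC, hcount⟩ := exists_idealCount_le_mul K
  exact summable_rpow_neg_of_card_le hC (fun s Q hs => le_trans
    (Nat.cast_le.2 (Finset.card_le_card_of_injOn (fun P => P.asIdeal)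
      (fun P hP => mem_idealsNormLE.2 ⟨P.ne_bot, hs P hP⟩)
      fun _ _ _ _ => HeightOneSpectrum.ext)) (hcount _ (Nat.cast_nonneg _))) hσ

variable {K}

theorem card_filter_pow_dvd_eq_multiplicity {I : Ideal (𝓞 K)} (hI : I ≠ 0) {n : ℕ}
    (hn : absNorm I ≤ n) (P : HeightOneSpectrum (𝓞 K)) [DecidablePred fun k => P.asIdeal ^ k ∣ I] :
    {k ∈ Finset.Icc 1 n | P.asIdeal ^ k ∣ I}.card = multiplicity P.asIdeal I := by
  have hfin : FiniteMultiplicity P.asIdeal I :=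
    FiniteMultiplicity.of_not_isUnit P.prime.not_isUnit hI
  have hle : multiplicity P.asIdeal I ≤ n := calc
    multiplicity P.asIdeal I ≤ absNorm P.asIdeal ^ multiplicity P.asIdeal I :=
      (Nat.lt_pow_self (HeightOneSpectrum.one_lt_absNorm P)).le
    _ = absNorm (P.asIdeal ^ multiplicity P.asIdeal I) := (map_pow _ _ _).symm
    _ ≤ absNorm I := Nat.le_of_dvd (Nat.pos_of_ne_zero (Ideal.absNorm_eq_zero_iff.not.2 hI))
      (Ideal.absNorm_dvd_absNorm_of_le (Ideal.le_of_dvd (pow_multiplicity_dvd _ _)))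
    _ ≤ n := hn
  have hfilter : {k ∈ Finset.Icc 1 n | P.asIdeal ^ k ∣ I} =
      Finset.Icc 1 (multiplicity P.asIdeal I) := by
    ext k
    rw [Finset.mem_filter, hfin.pow_dvd_iff_le_multiplicity, Finset.mem_Icc, Finset.mem_Icc]
    lia
  rw [hfilter, Nat.card_Icc, Nat.add_sub_cancel]

theorem log_absNorm_eq_sum {I : Ideal (𝓞 K)} (hI : I ≠ 0) {t : ℝ} (ht : (absNorm I : ℝ) ≤ t) :
    Real.log (absNorm I) = ∑ P ∈ primesNormLE K t,
      multiplicity P.asIdeal I * Real.log (absNorm P.asIdeal) := by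
  have hprod : ∏ P ∈ primesNormLE K t, P.asIdeal ^ multiplicity P.asIdeal I = I := by
    refine (finprod_eq_prod_of_mulSupport_subset _ fun P hP => ?_).symm.trans
      (Ideal.finprod_heightOneSpectrum_pow_multiplicity hI)
    have hdvd : P.asIdeal ∣ I := dvd_of_multiplicity_pos (Nat.pos_of_ne_zero fun h =>
      hP (by simp only [h, pow_zero]))
    refine mem_primesNormLE.2 (le_trans ?_ ht)
    exact Nat.cast_le.2 (Nat.le_of_dvd (Nat.pos_of_ne_zero (Ideal.absNorm_eq_zero_iff.not.2 hI))
      (Ideal.absNorm_dvd_absNorm_of_le (Ideal.le_of_dvd hdvd)))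
  conv_lhs => rw [← hprod]
  simp only [map_prod, map_pow, Nat.cast_prod, Nat.cast_pow]
  rw [Real.log_prod fun P _ => pow_ne_zero _ (two_pos.trans_le (two_le_absNorm P)).ne']
  simp only [Real.log_pow]

theorem sumLogNorm_eq_sum_primes (t : ℝ) :
    sumLogNorm K t = ∑ P ∈ primesNormLE K t, Real.log (absNorm P.asIdeal) *
      ∑ k ∈ Finset.Icc 1 ⌊t⌋₊, idealCount K (t / (absNorm P.asIdeal : ℝ) ^ k) := by
  classical
  have hmult : ∀ I ∈ idealsNormLE K t, Real.log (absNorm I) = ∑ P ∈ primesNormLE K t,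
      Real.log (absNorm P.asIdeal) *
        ∑ k ∈ Finset.Icc 1 ⌊t⌋₊, if P.asIdeal ^ k ∣ I then (1 : ℝ) else 0 := fun I hI => by
    obtain ⟨hI₀, hIt⟩ := mem_idealsNormLE.1 hI
    rw [log_absNorm_eq_sum hI₀ hIt]
    refine Finset.sum_congr rfl fun P _ => ?_
    rw [Finset.sum_boole, card_filter_pow_dvd_eq_multiplicity hI₀ (Nat.le_floor hIt), mul_comm]
  rw [sumLogNorm, Finset.sum_congr rfl hmult, Finset.sum_comm]
  refine Finset.sum_congr rfl fun P _ => ?_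
  rw [← Finset.mul_sum, Finset.sum_comm]
  refine congrArg _ (Finset.sum_congr rfl fun k _ => ?_)
  rw [Finset.sum_boole, card_filter_dvd_idealsNormLE (pow_ne_zero k P.ne_bot), map_pow,
    Nat.cast_pow]

theorem sum_log_mul_idealCount_le_sumLogNorm (t : ℝ) :
    ∑ P ∈ primesNormLE K t, Real.log (absNorm P.asIdeal) * idealCount K (t / absNorm P.asIdeal) ≤
      sumLogNorm K t := by
  rw [sumLogNorm_eq_sum_primes]
  refine Finset.sum_le_sum fun P hP =>
    mul_le_mul_of_nonneg_left ?_ (log_absNorm_pos P).le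
  have hone : 1 ∈ Finset.Icc 1 ⌊t⌋₊ := Finset.mem_Icc.2 ⟨le_rfl, Nat.le_floor (by
    push_cast
    linarith [two_le_absNorm P, mem_primesNormLE.1 hP])⟩
  simpa only [pow_one] using Finset.single_le_sum
    (f := fun k => idealCount K (t / (absNorm P.asIdeal : ℝ) ^ k))
    (fun k _ => Nat.cast_nonneg _) hone

variable (K)

theorem summable_log_div_absNorm_sq : Summable fun P : HeightOneSpectrum (𝓞 K) =>
    Real.log (absNorm P.asIdeal) / (absNorm P.asIdeal : ℝ) ^ 2 := by
  refine ((summable_absNorm_rpow_neg K (σ := 3 / 2) (by norm_num)).mul_left 2).of_nonneg_of_le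
    (fun P => div_nonneg (log_absNorm_pos P).le (sq_nonneg _)) fun P => ?_
  have hpos : (0 : ℝ) < absNorm P.asIdeal := two_pos.trans_le (two_le_absNorm P)
  have hsplit : (absNorm P.asIdeal : ℝ) ^ (-(3 / 2) : ℝ) * (absNorm P.asIdeal : ℝ) ^ 2 =
      (absNorm P.asIdeal : ℝ) ^ (1 / 2 : ℝ) := by
    rw [← Real.rpow_natCast, ← Real.rpow_add hpos]
    norm_num
  rw [div_le_iff₀ (by positivity), mul_assoc, hsplit]
  linarith [Real.log_le_rpow_div hpos.le (ε := 1 / 2) (by norm_num)]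

theorem exists_sumLogNorm_le_add_mul : ∃ D : ℝ, ∀ t, 0 ≤ t → sumLogNorm K t ≤
    ∑ P ∈ primesNormLE K t, Real.log (absNorm P.asIdeal) * idealCount K (t / absNorm P.asIdeal) +
      D * t := by
  obtain ⟨C, hC, hcount⟩ := exists_idealCount_le_mul K
  set S := ∑' P : HeightOneSpectrum (𝓞 K),
    Real.log (absNorm P.asIdeal) / (absNorm P.asIdeal : ℝ) ^ 2
  have hS : ∀ t, ∑ P ∈ primesNormLE K t,
      Real.log (absNorm P.asIdeal) / (absNorm P.asIdeal : ℝ) ^ 2 ≤ S := fun t =>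
    (summable_log_div_absNorm_sq K).sum_le_tsum _ fun P _ =>
      div_nonneg (log_absNorm_pos P).le (sq_nonneg _)
  refine ⟨2 * C * S, fun t ht => ?_⟩
  calc sumLogNorm K t
      ≤ ∑ P ∈ primesNormLE K t, Real.log (absNorm P.asIdeal) *
          (idealCount K (t / absNorm P.asIdeal) + 2 * C * t / (absNorm P.asIdeal : ℝ) ^ 2) := by
        rw [sumLogNorm_eq_sum_primes]
        exact Finset.sum_le_sum fun P _ => mul_le_mul_of_nonneg_left
          (sum_Icc_div_pow_le (fun _ => Nat.cast_nonneg _) hcount (two_le_absNorm P) ht _)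
          (log_absNorm_pos P).le
    _ = ∑ P ∈ primesNormLE K t, Real.log (absNorm P.asIdeal) *
          idealCount K (t / absNorm P.asIdeal) + 2 * C * t * ∑ P ∈ primesNormLE K t,
            Real.log (absNorm P.asIdeal) / (absNorm P.asIdeal : ℝ) ^ 2 := by
        rw [Finset.mul_sum, ← Finset.sum_add_distrib]
        exact Finset.sum_congr rfl fun P _ => by ring
    _ ≤ _ := by
        rw [mul_right_comm _ S]
        gcongr
        exact hS t

theorem eventually_mul_log_le_sumLogNorm {c : ℝ} (hc : c < dedekindZeta_residue K) :
    ∀ᶠ t in atTop, c * (t * Real.log t) ≤ sumLogNorm K t := by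
  have hκ := dedekindZeta_residue_pos K
  obtain ⟨ε, hε₀, hε⟩ := exists_between
    (lt_min one_pos (div_pos (sub_pos.2 hc) hκ))
  obtain ⟨hε₁, hεc⟩ := lt_min_iff.1 hε
  rw [lt_div_iff₀ hκ] at hεc
  have hcount := (tendsto_idealCount_div K).sub
    (((tendsto_idealCount_div K).comp (tendsto_id.const_mul_atTop hε₀)).const_mul ε)
  have hlim := hcount.mul (tendsto_log_const_mul_div_log hε₀)
  filter_upwards [hlim.eventually_const_le (by linarith : c < _),
    eventually_gt_atTop 1] with t hct ht
  have hlog := Real.log_pos ht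
  refine le_trans ?_ (idealCount_sub_mul_log_le_sumLogNorm (u := ε * t) (by positivity)
    (by nlinarith))
  refine (mul_le_mul_of_nonneg_right hct (by positivity)).trans_eq ?_
  simp only [Function.comp_apply, id]
  field_simp

variable {K} in
theorem mul_mertensSum_le_sumLogNorm {b x t₀ : ℝ} (ht₀ : 1 ≤ t₀) (hx : 0 ≤ x)
    (hb : ∀ t, t₀ ≤ t → b * t ≤ idealCount K t) :
    b * (x * t₀) * mertensSum K x ≤ sumLogNorm K (x * t₀) := calc
  b * (x * t₀) * mertensSum K x
    ≤ ∑ P ∈ primesNormLE K x,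
        Real.log (absNorm P.asIdeal) * idealCount K (x * t₀ / absNorm P.asIdeal) := by
      rw [mertensSum, Finset.mul_sum]
      refine Finset.sum_le_sum fun P hP => ?_
      have hP₀ : (0 : ℝ) < absNorm P.asIdeal := two_pos.trans_le (two_le_absNorm P)
      have hlarge : t₀ ≤ x * t₀ / absNorm P.asIdeal := by
        rw [le_div_iff₀ hP₀]
        nlinarith [mem_primesNormLE.1 hP]
      calc b * (x * t₀) * (Real.log (absNorm P.asIdeal) / absNorm P.asIdeal)
          = Real.log (absNorm P.asIdeal) * (b * (x * t₀ / absNorm P.asIdeal)) := by ring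
        _ ≤ _ := mul_le_mul_of_nonneg_left (hb _ hlarge) (log_absNorm_pos P).le
  _ ≤ ∑ P ∈ primesNormLE K (x * t₀),
        Real.log (absNorm P.asIdeal) * idealCount K (x * t₀ / absNorm P.asIdeal) :=
      Finset.sum_le_sum_of_subset_of_nonneg (primesNormLE_mono (by nlinarith)) fun P _ _ =>
        mul_nonneg (log_absNorm_pos P).le (Nat.cast_nonneg _)
  _ ≤ sumLogNorm K (x * t₀) := sum_log_mul_idealCount_le_sumLogNorm _

theorem eventually_mertensSum_le_mul_log {a : ℝ} (ha : 1 < a) :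
    ∀ᶠ x in atTop, mertensSum K x ≤ a * Real.log x := by
  have hκ := dedekindZeta_residue_pos K
  obtain ⟨b, hab, hbκ⟩ := exists_between (div_lt_self hκ ha)
  have hb : 0 < b := (div_pos hκ (by linarith)).trans hab
  obtain ⟨t₀, ht₁, hcount⟩ := exists_forall_ge_mul_le_idealCount K hbκ
  have ht₀ : 0 < t₀ := by linarith
  have hlim := ((tendsto_idealCount_div K).comp (tendsto_id.const_mul_atTop ht₀)).mul
    (tendsto_log_const_mul_div_log ht₀)
  have hκab : dedekindZeta_residue K * 1 < a * b := by
    rwa [mul_one, ← div_lt_iff₀' (by linarith)]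
  filter_upwards [hlim.eventually_le_const hκab, eventually_gt_atTop 1] with x hx hx₁
  have hlog := Real.log_pos hx₁
  have hx₀ : 0 < x := by linarith
  have hsum := (mul_mertensSum_le_sumLogNorm ht₁ hx₀.le hcount).trans
    (sumLogNorm_le_idealCount_mul_log _)
  refine le_of_mul_le_mul_left (hsum.trans ?_) (by positivity : 0 < b * (x * t₀))
  simp only [Function.comp_apply, id, div_mul_div_comm] at hx
  rw [div_le_iff₀ (by positivity), mul_comm t₀ x] at hx
  exact hx.trans_eq (by ring)

variable {K} in
theorem mertensSum_sub_mertensSum {x y : ℝ} (hxy : x ≤ y)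
    [DecidableEq (HeightOneSpectrum (𝓞 K))] :
    mertensSum K y - mertensSum K x =
      ∑ P ∈ primesNormLE K y \ primesNormLE K x, Real.log (absNorm P.asIdeal) / absNorm P.asIdeal :=
  (Finset.sum_sdiff_eq_sub (primesNormLE_mono hxy)).symm

variable {K} in
theorem sum_log_mul_idealCount_le {C c s x y : ℝ} (hC : ∀ t, 0 ≤ t → idealCount K t ≤ C * t)
    (hc : ∀ t, s ≤ t → idealCount K t ≤ c * t) (hy : 0 ≤ y) (hxy : x ≤ y) (hs : s * x ≤ y)
    (hs₀ : 0 ≤ s) :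
    ∑ P ∈ primesNormLE K y, Real.log (absNorm P.asIdeal) * idealCount K (y / absNorm P.asIdeal) ≤
      c * y * mertensSum K x + C * y * (mertensSum K y - mertensSum K x) := by
  classical
  have hle : ∀ (P : HeightOneSpectrum (𝓞 K)) (d : ℝ),
      idealCount K (y / absNorm P.asIdeal) ≤ d * (y / absNorm P.asIdeal) →
      Real.log (absNorm P.asIdeal) * idealCount K (y / absNorm P.asIdeal) ≤
        d * y * (Real.log (absNorm P.asIdeal) / absNorm P.asIdeal) := fun P d h =>
    (mul_le_mul_of_nonneg_left h (log_absNorm_pos P).le).trans_eq (by ring)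
  rw [mertensSum_sub_mertensSum hxy, ← Finset.sum_sdiff (primesNormLE_mono hxy), add_comm,
    mertensSum, Finset.mul_sum, Finset.mul_sum]
  refine add_le_add (Finset.sum_le_sum fun P hP => hle P c (hc _ ?_))
    (Finset.sum_le_sum fun P _ => hle P C (hC _ (by positivity)))
  rw [le_div_iff₀ (two_pos.trans_le (two_le_absNorm P))]
  exact (mul_le_mul_of_nonneg_left (mem_primesNormLE.1 hP) hs₀).trans hs

-- With `κ` the residue of `ζ_K` and `y = x ^ β`, `sumLogNorm K y` is about `κ y log y`, of which
-- the primes of norm at most `x` account for at most about `κ y log x`.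
theorem exists_mul_log_le_mertensSum_rpow_sub {β : ℝ} (hβ : 1 < β) : ∃ c : ℝ, 0 < c ∧
    ∀ᶠ x in atTop, c * Real.log x ≤ mertensSum K (x ^ β) - mertensSum K x := by
  have hκ := dedekindZeta_residue_pos K
  obtain ⟨c₁, hβc₁, hc₁⟩ := exists_between (div_lt_self hκ hβ)
  rw [div_lt_iff₀ (by linarith)] at hβc₁
  obtain ⟨c₂, hc₂, hc₂c₁⟩ := exists_between hβc₁
  have hc₂₀ : 0 < c₂ := hκ.trans hc₂
  obtain ⟨a, ha, hac⟩ := exists_between ((one_lt_div hc₂₀).2 hc₂c₁)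
  rw [lt_div_iff₀ hc₂₀] at hac
  obtain ⟨C, hC, hcount⟩ := exists_idealCount_le_mul K
  obtain ⟨D, hD⟩ := exists_sumLogNorm_le_add_mul K
  obtain ⟨s, hs, hcount₂⟩ := exists_forall_ge_idealCount_le_mul K hc₂
  refine ⟨(c₁ * β - a * c₂) / (2 * C), div_pos (by linarith) (by linarith), ?_⟩
  filter_upwards [eventually_gt_atTop 1, eventually_mertensSum_le_mul_log K ha,
    (tendsto_rpow_atTop (y := β) (by linarith)).eventually (eventually_mul_log_le_sumLogNorm K hc₁),
    (tendsto_rpow_atTop (sub_pos.2 hβ)).eventually_ge_atTop s,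
    (Real.tendsto_log_atTop.const_mul_atTop
      (half_pos (sub_pos.2 hac))).eventually_ge_atTop D] with x hx hM hlower hxs hDx
  have hx₀ : 0 < x := by linarith
  have hy : 0 < x ^ β := by positivity
  have hxy : x ≤ x ^ β := Real.self_le_rpow_of_one_le hx.le hβ.le
  have hsx : s * x ≤ x ^ β := by
    rw [← le_div_iff₀ hx₀, ← Real.rpow_sub_one hx₀.ne']
    exact hxs
  have hupper := (hD _ hy.le).trans (add_le_add_left
    (sum_log_mul_idealCount_le hcount hcount₂ hy.le hxy hsx (by linarith)) _)
  rw [Real.log_rpow hx₀] at hlower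
  have hmain : c₁ * (β * Real.log x) ≤
      c₂ * mertensSum K x + C * (mertensSum K (x ^ β) - mertensSum K x) + D := by
    refine le_of_mul_le_mul_left ?_ hy
    linarith
  rw [div_mul_eq_mul_div, div_le_iff₀ (by linarith)]
  nlinarith

variable {K} in
theorem mertensSum_sub_le_mul_tsum {r x y : ℝ} (hr : 1 < r) (hy : 1 ≤ y) (hxy : x ≤ y) :
    mertensSum K y - mertensSum K x ≤ Real.log y * y ^ (r - 1) *
      ∑' P : HeightOneSpectrum (𝓞 K), {P : HeightOneSpectrum (𝓞 K) |
        x < (absNorm P.asIdeal : ℝ)}.indicator (fun P => (absNorm P.asIdeal : ℝ) ^ (-r)) P := by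
  classical
  set T : HeightOneSpectrum (𝓞 K) → ℝ := {P : HeightOneSpectrum (𝓞 K) |
    x < (absNorm P.asIdeal : ℝ)}.indicator fun P => (absNorm P.asIdeal : ℝ) ^ (-r)
  have hT : ∀ P, 0 ≤ T P := Set.indicator_nonneg fun P _ => by positivity
  have hterm : ∀ P ∈ primesNormLE K y \ primesNormLE K x,
      Real.log (absNorm P.asIdeal) / absNorm P.asIdeal ≤ Real.log y * y ^ (r - 1) * T P := by
    intro P hP
    rw [Finset.mem_sdiff, mem_primesNormLE, mem_primesNormLE, not_le] at hP
    have hP₀ : (0 : ℝ) < absNorm P.asIdeal := two_pos.trans_le (two_le_absNorm P)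
    have hTP : T P = (absNorm P.asIdeal : ℝ) ^ (-r) := if_pos hP.2
    calc Real.log (absNorm P.asIdeal) / absNorm P.asIdeal
        = Real.log (absNorm P.asIdeal) * (absNorm P.asIdeal : ℝ) ^ (r - 1) * T P := by
          rw [hTP, mul_assoc, ← Real.rpow_add hP₀, div_eq_mul_inv, ← Real.rpow_neg_one]
          ring_nf
      _ ≤ Real.log y * y ^ (r - 1) * T P := by
          gcongr
          · exact hT P
          · exact Real.log_nonneg hy
          · exact hP.1
          · exact hP.1
  rw [mertensSum_sub_mertensSum hxy]
  refine (Finset.sum_le_sum hterm).trans ?_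
  rw [← Finset.mul_sum]
  exact mul_le_mul_of_nonneg_left
    (((summable_absNorm_rpow_neg K hr).indicator _).sum_le_tsum _ fun P _ => hT P)
    (mul_nonneg (Real.log_nonneg hy) (by positivity))

theorem eventually_mul_rpow_neg_le_tsum {r : ℝ} (hr : 1 < r) (A : ℝ) :
    ∀ᶠ x in atTop, A * x ^ (-r) ≤ ∑' P : HeightOneSpectrum (𝓞 K), {P : HeightOneSpectrum (𝓞 K) |
      x < (absNorm P.asIdeal : ℝ)}.indicator (fun P => (absNorm P.asIdeal : ℝ) ^ (-r)) P := by
  -- The exponent is chosen so that `(x ^ β) ^ (r - 1) = x ^ (r - 1 / 2)`.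
  set β := (r - 1 / 2) / (r - 1) with hβ_def
  have hr₁ : 0 < r - 1 := by linarith
  have hβ : 1 < β := (one_lt_div hr₁).2 (by linarith)
  obtain ⟨c, hc, hgrowth⟩ := exists_mul_log_le_mertensSum_rpow_sub K hβ
  filter_upwards [hgrowth, eventually_gt_atTop 1,
    ((tendsto_rpow_atTop (one_half_pos (α := ℝ))).const_mul_atTop
      (div_pos hc (one_pos.trans hβ))).eventually_ge_atTop A] with x hx hx₁ hA
  have hx₀ : 0 < x := by linarith
  have hlog := Real.log_pos hx₁
  have hxβ : x ≤ x ^ β := Real.self_le_rpow_of_one_le hx₁.le hβ.le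
  have htail := hx.trans (mertensSum_sub_le_mul_tsum hr (hx₁.le.trans hxβ) hxβ)
  rw [Real.log_rpow hx₀, ← Real.rpow_mul hx₀.le, hβ_def, div_mul_cancel₀ _ hr₁.ne', ← hβ_def]
    at htail
  calc A * x ^ (-r) ≤ c / β * x ^ (1 / 2 : ℝ) * x ^ (-r) := by gcongr
    _ = c * Real.log x / (β * Real.log x * x ^ (r - 1 / 2)) := by
      rw [mul_assoc, ← Real.rpow_add hx₀, show 1 / 2 + -r = -(r - 1 / 2) by ring,
        Real.rpow_neg hx₀.le]
      field_simp
    _ ≤ _ := by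
      rw [div_le_iff₀' (by positivity)]
      exact htail

theorem infinite_heightOneSpectrum : Infinite (HeightOneSpectrum (𝓞 K)) := by
  refine not_finite_iff_infinite.1 fun hfin => ?_
  obtain ⟨B, hB⟩ := (Set.finite_range fun P : HeightOneSpectrum (𝓞 K) =>
    (absNorm P.asIdeal : ℝ)).bddAbove
  obtain ⟨x, hx, hxB, hx₀⟩ := ((eventually_mul_rpow_neg_le_tsum K one_lt_two 1).and
    ((eventually_ge_atTop B).and (eventually_gt_atTop 0))).exists
  have hempty : {P : HeightOneSpectrum (𝓞 K) | x < (absNorm P.asIdeal : ℝ)} = ∅ :=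
    Set.eq_empty_of_forall_notMem fun P hP => (hB ⟨P, rfl⟩).not_gt (hxB.trans_lt hP)
  simp only [hempty, Set.indicator_empty, tsum_zero] at hx
  linarith [Real.rpow_pos_of_pos hx₀ (-2)]

theorem eventually_cofinite_coprime_absNorm {m : ℕ} (hm : m ≠ 0) :
    ∀ᶠ P : HeightOneSpectrum (𝓞 K) in cofinite, (absNorm P.asIdeal).Coprime m := by
  have hspan : Ideal.span {(m : 𝓞 K)} ≠ 0 := by
    rwa [Ne, Ideal.zero_eq_bot, Ideal.span_singleton_eq_bot, Nat.cast_eq_zero]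
  refine (Ideal.finite_factors hspan).subset fun P hP => ?_
  have := P.isMaximal
  obtain ⟨p, n, -, hpP, hp, hpow⟩ := Ideal.exists_prime_and_absNorm_eq_pow P.asIdeal
  have hpm : p ∣ m := by
    by_contra h
    refine hP ?_
    simp only [Set.mem_ofPred_eq, hpow]
    exact ((Nat.Prime.coprime_iff_not_dvd hp).2 h).pow_left n
  exact Ideal.dvd_span_singleton.2 (Ideal.mem_of_dvd _ (Nat.cast_dvd_cast hpm) hpP)

variable {K}

theorem absNorm_rpow_neg_le_half {r : ℝ} (hr : 1 ≤ r) (P : HeightOneSpectrum (𝓞 K)) :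
    (absNorm P.asIdeal : ℝ) ^ (-r) ≤ 1 / 2 := calc
  (absNorm P.asIdeal : ℝ) ^ (-r) ≤ (absNorm P.asIdeal : ℝ) ^ (-1 : ℝ) :=
    Real.rpow_le_rpow_of_exponent_le (one_le_absNorm P.ne_bot) (neg_le_neg hr)
  _ ≤ 1 / 2 := by
    rw [Real.rpow_neg_one, one_div]
    exact inv_anti₀ two_pos (two_le_absNorm P)

theorem eventually_cofinite_mul_absNorm_rpow_neg_le_tsum {r : ℝ} (hr : 1 < r)
    {g : HeightOneSpectrum (𝓞 K) → ℝ} (hg : Summable g) {c : ℝ} (hc : 0 < c)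
    (hcg : ∀ᶠ P in cofinite, c * (absNorm P.asIdeal : ℝ) ^ (-r) ≤ g P) (A : ℝ) :
    ∀ᶠ P : HeightOneSpectrum (𝓞 K) in cofinite, A * (absNorm P.asIdeal : ℝ) ^ (-r) ≤
      ∑' Q : HeightOneSpectrum (𝓞 K),
        {Q | absNorm P.asIdeal < absNorm Q.asIdeal}.indicator g Q := by
  filter_upwards [eventually_cofinite_forall_ge tendsto_absNorm_asIdeal_cofinite hcg,
    (tendsto_natCast_atTop_atTop.comp tendsto_absNorm_asIdeal_cofinite).eventually
      (eventually_mul_rpow_neg_le_tsum K hr (A / c))] with P hP htail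
  simp only [Function.comp_apply, Nat.cast_lt] at htail
  set L := {Q : HeightOneSpectrum (𝓞 K) | absNorm P.asIdeal < absNorm Q.asIdeal}
  calc A * (absNorm P.asIdeal : ℝ) ^ (-r)
      = c * (A / c * (absNorm P.asIdeal : ℝ) ^ (-r)) := by field_simp
    _ ≤ c * ∑' Q, L.indicator (fun Q => (absNorm Q.asIdeal : ℝ) ^ (-r)) Q := by gcongr
    _ = ∑' Q, L.indicator (fun Q => c * (absNorm Q.asIdeal : ℝ) ^ (-r)) Q := by
      rw [← tsum_mul_left]
      simp only [Set.indicator_const_mul]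
    _ ≤ ∑' Q, L.indicator g Q := Summable.tsum_le_tsum
      (fun Q => Set.indicator_le_indicator' fun hQ => hP Q (le_of_lt hQ))
      (((summable_absNorm_rpow_neg K hr).mul_left c).indicator L) (hg.indicator L)

theorem finite_connectedComponents_closure_range_log_geom_sum {r : ℝ} (hr : 1 < r)
    {x : HeightOneSpectrum (𝓞 K) → ℝ} (hx : ∀ P, |x P| ≤ (absNorm P.asIdeal : ℝ) ^ (-r))
    (hx' : ∀ᶠ P in cofinite, |x P| = (absNorm P.asIdeal : ℝ) ^ (-r)) :
    Finite (ConnectedComponents ↥(closure (Set.range fun e : HeightOneSpectrum (𝓞 K) →₀ ℕ =>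
      e.sum fun P k => Real.log (∑ i ∈ Finset.range (k + 1), x P ^ i)))) := by
  have hx_half : ∀ P, |x P| ≤ 1 / 2 := fun P => (hx P).trans (absNorm_rpow_neg_le_half hr.le P)
  have hbound : ∀ P k, |Real.log (∑ i ∈ Finset.range (k + 1), x P ^ i)| ≤
      2 * (absNorm P.asIdeal : ℝ) ^ (-r) := fun P k =>
    (abs_log_geom_sum_le (hx_half P) k).trans (by linarith [hx P])
  have hfirst : ∀ᶠ P in cofinite, 1 / 2 * (absNorm P.asIdeal : ℝ) ^ (-r) ≤
      |Real.log (∑ i ∈ Finset.range (1 + 1), x P ^ i)| := hx'.mono fun P hP => by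
    rw [Finset.sum_range_succ, Finset.sum_range_one, pow_zero, pow_one, ← hP, one_div_mul_eq_div]
    exact abs_div_two_le_abs_log_one_add (hx_half P)
  have hsummable := (summable_absNorm_rpow_neg K hr).mul_left 2
  have := infinite_heightOneSpectrum K
  refine finite_connectedComponents_closure_range_finsupp_sum tendsto_absNorm_asIdeal_cofinite
    (fun P => by simp) hsummable hbound (hfirst.mono fun P hP => ?_).frequently ?_
  · have hpos : 0 < (absNorm P.asIdeal : ℝ) ^ (-r) :=
      Real.rpow_pos_of_pos (two_pos.trans_le (two_le_absNorm P)) _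
    exact abs_pos.1 ((mul_pos one_half_pos hpos).trans_le hP)
  filter_upwards [eventually_cofinite_mul_absNorm_rpow_neg_le_tsum hr
    (hsummable.of_nonneg_of_le (fun _ => abs_nonneg _) fun P => hbound P 1)
    one_half_pos hfirst 4] with P hP j k
  linarith [le_abs_self (Real.log (∑ i ∈ Finset.range (j + 1), x P ^ i)), hbound P j,
    neg_abs_le (Real.log (∑ i ∈ Finset.range (k + 1), x P ^ i)), hbound P k]

theorem finite_connectedComponents_closure_image_divisorSum {r : ℝ} (hr : 1 < r)
    (ψ : Ideal (𝓞 K) →* ℝ)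
    (hψ : ∀ P : HeightOneSpectrum (𝓞 K), |ψ P.asIdeal| ≤ (absNorm P.asIdeal : ℝ) ^ (-r))
    (hψ' : ∀ᶠ P : HeightOneSpectrum (𝓞 K) in cofinite,
      |ψ P.asIdeal| = (absNorm P.asIdeal : ℝ) ^ (-r)) :
    Finite (ConnectedComponents ↥(closure (divisorSum ψ '' {I | I ≠ 0}))) := by
  set f : HeightOneSpectrum (𝓞 K) → ℕ → ℝ := fun P k =>
    Real.log (∑ i ∈ Finset.range (k + 1), ψ P.asIdeal ^ i)
  have hψ_half : ∀ P : HeightOneSpectrum (𝓞 K), |ψ P.asIdeal| ≤ 1 / 2 := fun P =>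
    (hψ P).trans (absNorm_rpow_neg_le_half hr.le P)
  have himage : divisorSum ψ '' {I | I ≠ 0} =
      Real.exp '' Set.range fun e : HeightOneSpectrum (𝓞 K) →₀ ℕ => e.sum f := by
    rw [image_divisorSum_ne_zero, ← Set.range_comp]
    refine congrArg Set.range (funext fun e => ?_)
    rw [Function.comp_apply, Finsupp.sum, Real.exp_sum]
    exact Finset.prod_congr rfl fun P _ => (Real.exp_log
      (geom_sum_pos_of_abs_lt_one (by linarith [hψ_half P]) _)).symm
  have hcompact : IsCompact (closure (Set.range fun e : HeightOneSpectrum (𝓞 K) →₀ ℕ => e.sum f)) :=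
    (isBounded_range_finsupp_sum ((summable_absNorm_rpow_neg K hr).mul_left 2) fun P k =>
      (abs_log_geom_sum_le (hψ_half P) k).trans (by linarith [hψ P])).isCompact_closure
  rw [himage, ← image_closure_of_isCompact hcompact Real.continuous_exp.continuousOn]
  exact finite_connectedComponents_image Real.continuous_exp.continuousOn
    (finite_connectedComponents_closure_range_log_geom_sum hr hψ hψ')

variable (K)

/-- The completely multiplicative function `J ↦ χ (N J) * (N J) ^ (-r)` whose divisor sums are the
values of `sigmaChi K χ r`. -/
noncomputable def normTwist {m : ℕ} (χ : DirichletCharacter ℝ m) (r : ℝ) : Ideal (𝓞 K) →* ℝ where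
  toFun J := χ (absNorm J : ZMod m) * (absNorm J : ℝ) ^ (-r)
  map_one' := by simp
  map_mul' I J := by
    rw [map_mul, Nat.cast_mul, Nat.cast_mul, map_mul,
      Real.mul_rpow (Nat.cast_nonneg _) (Nat.cast_nonneg _), mul_mul_mul_comm]

variable {K} {m : ℕ} (χ : DirichletCharacter ℝ m) (r : ℝ)

theorem abs_normTwist (J : Ideal (𝓞 K)) :
    |normTwist K χ r J| = ‖χ (absNorm J : ZMod m)‖ * (absNorm J : ℝ) ^ (-r) := by
  rw [normTwist, MonoidHom.coe_mk, OneHom.coe_mk, abs_mul, Real.norm_eq_abs,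
    abs_of_nonneg (Real.rpow_nonneg (Nat.cast_nonneg _) _)]

theorem abs_normTwist_le (J : Ideal (𝓞 K)) :
    |normTwist K χ r J| ≤ (absNorm J : ℝ) ^ (-r) := by
  rw [abs_normTwist]
  exact mul_le_of_le_one_left (by positivity) (χ.norm_le_one _)

theorem abs_normTwist_of_coprime {J : Ideal (𝓞 K)} (hJ : (absNorm J).Coprime m) :
    |normTwist K χ r J| = (absNorm J : ℝ) ^ (-r) := by
  rw [abs_normTwist, ← ZMod.coe_unitOfCoprime _ hJ, χ.unit_norm_eq_one, one_mul]

end IdealCounting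

/-- For `r > 1` and a real Dirichlet character `χ`, the closure of the image of the twisted
ideal divisor function on the nonzero integral ideals of a number field has finitely many
connected components. -/
theorem stmt0 (r : ℝ) (hr : 1 < r) (K : Type*) [Field K] [NumberField K]
    (m : ℕ) (hm : 0 < m) (χ : DirichletCharacter ℝ m)
    (hχ : ∀ a : ZMod m, χ a = -1 ∨ χ a = 0 ∨ χ a = 1) :
    Finite (ConnectedComponents
      ↥(closure (sigmaChi K χ r '' {I : Ideal (𝓞 K) | I ≠ 0}))) := by
  have hle : ∀ P : IsDedekindDomain.HeightOneSpectrum (𝓞 K),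
      |normTwist K χ r P.asIdeal| ≤ (Ideal.absNorm P.asIdeal : ℝ) ^ (-r) :=
    fun P => abs_normTwist_le χ r P.asIdeal
  have heq : ∀ᶠ P : IsDedekindDomain.HeightOneSpectrum (𝓞 K) in .cofinite,
      |normTwist K χ r P.asIdeal| = (Ideal.absNorm P.asIdeal : ℝ) ^ (-r) :=
    (eventually_cofinite_coprime_absNorm K hm.ne').mono fun _ => abs_normTwist_of_coprime χ r
  exact finite_connectedComponents_closure_image_divisorSum hr (normTwist K χ r) hle heq
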